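/- For every n ≥ 4, let A_n be the deterministic finite automaton with state set {0,1,…,n-1}, alphabet {a,b,c,d,e,f}, initial state 0 and final state set {n-1}, where a acts as the cycle (1,2,…,n-2) fixing 0 and n-1, b acts as the transposition (1,2), c maps n-2 to 1 and fixes all other states, d maps n-2 to 0 and fixes all other states, e maps every state in {0,…,n-2} to 1 and fixes n-1, and f maps 1 to n-1 and fixes all other states. Then A_n is minimal, and the language L = L(A_n) is a two-sided ideal with quotient complexity n and syntactic complexity σ(L) = n^{n-2} + (n-2)·2^{n-2} + 1. -/

import Mathlib

/-!
Every word acts on the states as a transformation `t` fixing `n-1` with either `t 0 = 0`, or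
`t q ∈ {t 0, n-1}` for all `q` (`Good`): each letter has this form and the form is stable under
composition (`good_word`). Conversely every such `t` comes from a word (`mem_words_of_good`):

* conjugating `b = (1,2)` by powers of `a` gives the adjacent transpositions of `{1,…,n-2}`, hence
  all permutations fixing `0` and `n-1` (`mem_words_of_perm`);
* conjugating `c`, `d`, `f` by permutations gives all maps moving a single state
  `x ∈ {1,…,n-2}` to an arbitrary state (`mem_words_assign`);
* a non-injective `t` fixing `0` and `n-1` is such a map followed by one of larger range, so
  induction on the size of the range gives all transformations fixing `0` and `n-1`
  (`mem_words_of_fix`);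
* the remaining transformations factor through `e`.

Reachability and distinguishability of states are read off this description, as is the fact
that a word accepted from `0` sends every state to `n-1`, which makes the language a two-sided
ideal. For a minimal automaton the quotient complexity is the number of states and two words are
syntactically congruent iff they act equally (`synRel_iff`), so the syntactic complexity is the
number of `Good` transformations: `n^(n-2)` fix `0`, `(n-2) * 2^(n-2)` send `0` into
`{1,…,n-2}`, and one sends `0` to `n-1`. The empty word does not matter, because `bb` acts as the
identity.
-/

/-- The left quotient of a language `L` by a word `w`: `{x | w ++ x ∈ L}`. -/
def leftQ {α : Type*} (L : Set (List α)) (w : List α) : Set (List α) :=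
  {x | w ++ x ∈ L}

/-- Quotient (state) complexity: the number of distinct left quotients of `L`. -/
noncomputable def quotCompl {α : Type*} (L : Set (List α)) : ℕ :=
  Nat.card (Set.range (leftQ L))

/-- The syntactic (Myhill) congruence of `L`. -/
def synRel {α : Type*} (L : Set (List α)) (x y : List α) : Prop :=
  ∀ u v : List α, u ++ x ++ v ∈ L ↔ u ++ y ++ v ∈ L

/-- The syntactic setoid on the free semigroup of non-empty words. -/
def synSetoid {α : Type*} (L : Set (List α)) : Setoid {w : List α // w ≠ []} :=
  ⟨fun x y => synRel L x.1 y.1,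
   ⟨fun _ _ _ => Iff.rfl, fun h u v => (h u v).symm,
    fun h₁ h₂ u v => (h₁ u v).trans (h₂ u v)⟩⟩

/-- Syntactic complexity: the cardinality of the syntactic semigroup of `L`. -/
noncomputable def synCompl {α : Type*} (L : Set (List α)) : ℕ :=
  Nat.card (Quotient (synSetoid L))

/-- `L` is a right ideal: it is non-empty and `L = LΣ*`. -/
def IsRightIdeal {α : Type*} (L : Set (List α)) : Prop :=
  L.Nonempty ∧ L = {x | ∃ u ∈ L, ∃ v : List α, x = u ++ v}

/-- `L` is a left ideal: it is non-empty and `L = Σ*L`. -/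
def IsLeftIdeal {α : Type*} (L : Set (List α)) : Prop :=
  L.Nonempty ∧ L = {x | ∃ u : List α, ∃ v ∈ L, x = u ++ v}

/-- `L` is a two-sided ideal: it is non-empty and `L = Σ*LΣ*`. -/
def IsTwoSidedIdeal {α : Type*} (L : Set (List α)) : Prop :=
  L.Nonempty ∧ L = {x | ∃ u : List α, ∃ w ∈ L, ∃ v : List α, x = u ++ w ++ v}

/-- The reverse of a language. -/
def langReverse {α : Type*} (L : Set (List α)) : Set (List α) :=
  List.reverse '' L

/-- A DFA is minimal: every state is reachable from the start state, and no two
distinct states accept the same set of words. -/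
def DFAMinimal {α σ : Type*} (M : DFA α σ) : Prop :=
  (∀ q : σ, ∃ w : List α, M.evalFrom M.start w = q) ∧
  ∀ p q : σ, (∀ w : List α, M.evalFrom p w ∈ M.accept ↔ M.evalFrom q w ∈ M.accept) → p = q

/-- The transition function of the automaton `𝒜_n` of Definition 4 (two-sided
ideals): `a = (1,2,…,n-2)` fixing `0` and `n-1`, `b = (1,2)`, `c : n-2 ↦ 1`,
`d : n-2 ↦ 0`, `e` maps every state in `{0,…,n-2}` to `1` and fixes `n-1`, and
`f : 1 ↦ n-1`. -/
def step18 (n : ℕ) (hn : 4 ≤ n) : Fin n → Fin 6 → Fin n := fun q l =>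
  if l.val = 0 then -- a : the cycle (1, 2, …, n-2), fixing 0 and n-1
    if q.val = 0 then q
    else if q.val = n - 2 then ⟨1, by omega⟩
    else if _h : q.val = n - 1 then q
    else ⟨q.val + 1, by have := q.isLt; omega⟩
  else if l.val = 1 then -- b : the transposition (1, 2)
    if q.val = 1 then ⟨2, by omega⟩
    else if q.val = 2 then ⟨1, by omega⟩
    else q
  else if l.val = 2 then -- c : n-2 ↦ 1, fixing all other states
    if q.val = n - 2 then ⟨1, by omega⟩ else q
  else if l.val = 3 then -- d : n-2 ↦ 0, fixing all other states
    if q.val = n - 2 then ⟨0, by omega⟩ else q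
  else if l.val = 4 then -- e : every state in {0,…,n-2} ↦ 1, fixing n-1
    if q.val = n - 1 then q else ⟨1, by omega⟩
  else -- f : 1 ↦ n-1, fixing all other states
    if q.val = 1 then ⟨n - 1, by omega⟩ else q

/-! ### Minimal automata -/

section Minimal

variable {α σ : Type*} {M : DFA α σ}

theorem synRel_iff (h : DFAMinimal M) (x y : List α) :
    synRel (M.accepts : Set (List α)) x y ↔ ∀ q, M.evalFrom q x = M.evalFrom q y := by
  constructor
  · intro hs q
    obtain ⟨u, rfl⟩ := h.1 q
    apply h.2
    intro v
    have : M.evalFrom M.start (u ++ x ++ v) ∈ M.accept ↔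
      M.evalFrom M.start (u ++ y ++ v) ∈ M.accept := hs u v
    simpa only [DFA.evalFrom_of_append] using this
  · intro hq u v
    change M.evalFrom M.start (u ++ x ++ v) ∈ M.accept ↔
      M.evalFrom M.start (u ++ y ++ v) ∈ M.accept
    simp only [DFA.evalFrom_of_append, hq]

theorem quotCompl_eq_card (h : DFAMinimal M) :
    quotCompl (M.accepts : Set (List α)) = Nat.card σ := by
  let g : σ → Set (List α) := fun q => {x | M.evalFrom q x ∈ M.accept}
  have hg : Function.Injective g := by
    intro p q hpq
    apply h.2
    intro w
    exact Set.ext_iff.1 hpq w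
  have key : ∀ w, leftQ (M.accepts : Set (List α)) w = g (M.evalFrom M.start w) := by
    intro w
    ext x
    change M.evalFrom M.start (w ++ x) ∈ M.accept ↔ _
    rw [DFA.evalFrom_of_append]
    rfl
  have hr : Set.range (leftQ (M.accepts : Set (List α))) = Set.range g := by
    ext s
    constructor
    · rintro ⟨w, rfl⟩
      exact ⟨_, (key w).symm⟩
    · rintro ⟨q, rfl⟩
      obtain ⟨w, rfl⟩ := h.1 q
      exact ⟨w, key w⟩
  unfold quotCompl
  rw [hr]
  exact Nat.card_range_of_injective hg

/-- The transformations of the state set induced by words (the empty one included). -/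
def words (M : DFA α σ) : Set (σ → σ) :=
  {t | ∃ w, ∀ q, M.evalFrom q w = t q}

theorem id_mem_words : id ∈ words M := ⟨[], fun _ => rfl⟩

theorem comp_mem_words {s t : σ → σ} (hs : s ∈ words M) (ht : t ∈ words M) :
    s ∘ t ∈ words M := by
  obtain ⟨v, hv⟩ := hs
  obtain ⟨w, hw⟩ := ht
  refine ⟨w ++ v, fun q => ?_⟩
  rw [DFA.evalFrom_of_append, hw, hv]
  rfl

end Minimal

/-! ### The transformations induced by words -/

section Words

variable {n : ℕ} (hn : 4 ≤ n)

/-- The automaton of the theorem. -/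
abbrev M18 : DFA (Fin 6) (Fin n) :=
  { step := step18 n hn, start := ⟨0, by omega⟩, accept := {⟨n - 1, by omega⟩} }

/-- The transformations attained by words of `M18`: they fix `n-1`, and either fix `0` or map
every state to the image of `0` or to `n-1`. -/
def Good (t : Fin n → Fin n) : Prop :=
  t ⟨n - 1, by omega⟩ = ⟨n - 1, by omega⟩ ∧
    (t ⟨0, by omega⟩ = ⟨0, by omega⟩ ∨
      ∀ q, t q = t ⟨0, by omega⟩ ∨ t q = ⟨n - 1, by omega⟩)

theorem good_letter (l : Fin 6) : Good hn (fun q => step18 n hn q l) := by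
  have h1 : n - 1 ≠ n - 2 := by omega
  have h2 : n - 1 ≠ 0 := by omega
  have h3 : n - 1 ≠ 1 := by omega
  have h4 : n - 1 ≠ 2 := by omega
  have h5 : 0 ≠ n - 2 := by omega
  fin_cases l <;> simp [Good, step18, h1, h2, h3, h4, h5, h2.symm]
  intro q
  by_cases h : q.val = n - 1
  · exact Or.inr (by simp [h, Fin.ext_iff])
  · exact Or.inl (by simp [h])

theorem Good.comp {s t : Fin n → Fin n} (hs : Good hn s) (ht : Good hn t) :
    Good hn (fun q => s (t q)) := by
  obtain ⟨s1, s2⟩ := hs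
  obtain ⟨t1, t2⟩ := ht
  refine ⟨by simp only [t1, s1], ?_⟩
  rcases t2 with t2 | t2
  · simp only [t2]
    rcases s2 with s2 | s2
    · exact Or.inl s2
    · exact Or.inr fun q => s2 _
  · right
    intro q
    rcases t2 q with h | h
    · exact Or.inl (by simp only [h])
    · exact Or.inr (by simp only [h, s1])

theorem good_word (w : List (Fin 6)) : Good hn (fun q => (M18 hn).evalFrom q w) := by
  induction w with
  | nil => exact ⟨rfl, Or.inl rfl⟩
  | cons l w ih => exact Good.comp hn ih (good_letter hn l)

theorem mem_words_letter (l : Fin 6) :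
    (fun q => step18 n hn q l) ∈ words (M18 hn) :=
  ⟨[l], fun _ => rfl⟩

/-- The letter `a` as a permutation. -/
theorem exists_perm_a : ∃ τ : Equiv.Perm (Fin n), ∀ q, τ q = step18 n hn q 0 := by
  have hinj : Function.Injective (fun q => step18 n hn q 0) := by
    intro p q h
    have := p.isLt
    have := q.isLt
    simp only [step18] at h
    apply Fin.ext
    simp only [Fin.val_zero, if_true] at h
    split_ifs at h <;> simp only [Fin.ext_iff] at h <;> omega
  exact ⟨Equiv.ofBijective _ (Finite.injective_iff_bijective.1 hinj), fun q => rfl⟩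

theorem mul_mem_words {τ ρ : Equiv.Perm (Fin n)} (hτ : ⇑τ ∈ words (M18 hn))
    (hρ : ⇑ρ ∈ words (M18 hn)) : ⇑(τ * ρ) ∈ words (M18 hn) := by
  rw [Equiv.Perm.coe_mul]
  exact comp_mem_words hτ hρ

theorem mem_words_inv {τ : Equiv.Perm (Fin n)} (h : (⇑τ) ∈ words (M18 hn)) :
    (⇑τ⁻¹) ∈ words (M18 hn) := by
  have h1 : τ⁻¹ = τ ^ (orderOf τ - 1) := by
    rw [inv_eq_iff_mul_eq_one, ← pow_succ', Nat.sub_add_cancel (orderOf_pos τ), pow_orderOf_eq_one]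
  have hpow : ∀ k : ℕ, ⇑(τ ^ k) ∈ words (M18 hn) := by
    intro k
    induction k with
    | zero => exact id_mem_words
    | succ k ih =>
      rw [pow_succ]
      exact mul_mem_words hn ih h
  rw [h1]
  exact hpow _

theorem mem_words_conj {τ ρ : Equiv.Perm (Fin n)}
    (hτ : (⇑τ) ∈ words (M18 hn))
    (hρ : (⇑ρ) ∈ words (M18 hn)) :
    (⇑(τ * ρ * τ⁻¹)) ∈ words (M18 hn) :=
  mul_mem_words hn (mul_mem_words hn hτ hρ) (mem_words_inv hn hτ)

theorem mem_words_swap_adj (k : ℕ) (hk : k + 2 < n - 1) :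
    (⇑(Equiv.swap (⟨k + 1, by omega⟩ : Fin n) ⟨k + 2, by omega⟩)) ∈
      words (M18 hn) := by
  induction k with
  | zero =>
    convert mem_words_letter hn 1 using 1
    funext q
    simp only [Equiv.swap_apply_def, step18, Fin.ext_iff]
    simp
  | succ k ih =>
    obtain ⟨τ, hτ⟩ := exists_perm_a hn
    have hmem : (⇑τ) ∈ words (M18 hn) := by
      convert mem_words_letter hn 0 using 1
      funext q
      exact hτ q
    have h1 : τ ⟨k + 1, by omega⟩ = ⟨k + 1 + 1, by omega⟩ := by
      rw [hτ]
      simp [step18, show k + 1 ≠ n - 2 by omega, show k + 1 ≠ n - 1 by omega]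
    have h2 : τ ⟨k + 2, by omega⟩ = ⟨k + 1 + 2, by omega⟩ := by
      rw [hτ]
      simp [step18, show k + 2 ≠ n - 2 by omega, show k + 2 ≠ n - 1 by omega]
    rw [← h1, ← h2, Equiv.swap_apply_apply]
    exact mem_words_conj hn hmem (ih (by omega))

theorem mem_words_swap_one (k : ℕ) (hk : k + 1 < n - 1) :
    (⇑(Equiv.swap (⟨1, by omega⟩ : Fin n) ⟨k + 1, by omega⟩)) ∈
      words (M18 hn) := by
  induction k with
  | zero =>
    simp only [Nat.zero_add, Equiv.swap_self]
    exact id_mem_words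
  | succ k ih =>
    rcases Nat.eq_zero_or_pos k with rfl | hpos
    · exact mem_words_swap_adj hn 0 (by omega)
    have := mem_words_conj hn (mem_words_swap_adj hn k (by omega)) (ih (by omega))
    rw [← Equiv.swap_apply_apply, Equiv.swap_apply_left, Equiv.swap_apply_of_ne_of_ne] at this
    · exact this
    · simp [Fin.ext_iff]; omega
    · simp [Fin.ext_iff]

/-- The states `1,…,n-2`. -/
def Mid (q : Fin n) : Prop := q ≠ ⟨0, by omega⟩ ∧ q ≠ ⟨n - 1, by omega⟩

instance : DecidablePred (Mid hn) := fun q => by unfold Mid; infer_instance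

theorem mid_iff {q : Fin n} : Mid hn q ↔ 0 < q.val ∧ q.val < n - 1 := by
  have := q.isLt
  simp only [Mid, ne_eq, Fin.ext_iff]
  omega

theorem mem_words_swap {x y : Fin n} (hx : Mid hn x) (hy : Mid hn y) :
    (⇑(Equiv.swap x y)) ∈ words (M18 hn) := by
  have one : ∀ {z : Fin n}, Mid hn z →
      (⇑(Equiv.swap ⟨1, by omega⟩ z)) ∈ words (M18 hn) := by
    intro z hz
    rw [mid_iff] at hz
    convert mem_words_swap_one hn (z.val - 1) (by omega) using 3
    apply Fin.ext
    simp only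
    omega
  by_cases hxy : x = y
  · subst hxy
    rw [Equiv.swap_self]
    exact id_mem_words
  by_cases hx1 : x = ⟨1, by omega⟩
  · subst hx1
    exact one hy
  have := mem_words_conj hn (one hx) (one hy)
  rw [← Equiv.swap_apply_apply, Equiv.swap_apply_left] at this
  by_cases hy1 : y = ⟨1, by omega⟩
  · subst hy1
    rw [Equiv.swap_comm]
    exact one hx
  · rwa [Equiv.swap_apply_of_ne_of_ne hy1 (Ne.symm hxy)] at this

theorem mem_words_of_perm (τ : Equiv.Perm (Fin n)) (h0 : τ ⟨0, by omega⟩ = ⟨0, by omega⟩)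
    (h1 : τ ⟨n - 1, by omega⟩ = ⟨n - 1, by omega⟩) :
    (⇑τ) ∈ words (M18 hn) := by
  have hsub : ∀ ρ : Equiv.Perm {q // Mid hn q},
      (⇑(Equiv.Perm.ofSubtype ρ)) ∈ words (M18 hn) := by
    intro ρ
    induction ρ using Equiv.Perm.swap_induction_on with
    | one =>
      rw [map_one]
      exact id_mem_words
    | swap_mul f x y _ ih =>
      rw [map_mul, Equiv.Perm.ofSubtype_swap_eq]
      exact mul_mem_words hn (mem_words_swap hn x.2 y.2) ih
  have hp : ∀ q, Mid hn (τ q) ↔ Mid hn q := by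
    intro q
    have e0 : τ q = ⟨0, by omega⟩ ↔ q = ⟨0, by omega⟩ := by
      conv_lhs => rw [← h0]
      exact τ.injective.eq_iff
    have e1 : τ q = ⟨n - 1, by omega⟩ ↔ q = ⟨n - 1, by omega⟩ := by
      conv_lhs => rw [← h1]
      exact τ.injective.eq_iff
    simp only [Mid, ne_eq, e0, e1]
  have := hsub (τ.subtypePerm hp)
  rwa [Equiv.Perm.ofSubtype_subtypePerm] at this
  intro q hq
  refine ⟨?_, ?_⟩
  · rintro rfl
    exact hq h0
  · rintro rfl
    exact hq h1

theorem mem_words_assign {x y : Fin n} (hx : Mid hn x) :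
    (Function.update id x y) ∈ words (M18 hn) := by
  -- Transport along a permutation `τ` induced by a word.
  have conj : ∀ (τ : Equiv.Perm (Fin n)) (p r : Fin n),
      (⇑τ) ∈ words (M18 hn) →
      (Function.update id p r) ∈ words (M18 hn) →
      (Function.update id (τ p) (τ r)) ∈ words (M18 hn) := by
    intro τ p r hτ hpr
    convert comp_mem_words (comp_mem_words hτ hpr) (mem_words_inv hn hτ) using 1
    funext q
    change _ = τ (Function.update id p r (τ⁻¹ q))
    obtain ⟨q, rfl⟩ := τ.surjective q
    by_cases h : q = p
    · subst h
      simp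
    · simp [Function.update_of_ne h, Function.update_of_ne (τ.injective.ne h)]
  have hlast : Mid hn ⟨n - 2, by omega⟩ := (mid_iff hn).2 (by simp only; omega)
  have hone : Mid hn ⟨1, by omega⟩ := (mid_iff hn).2 (by simp only; omega)
  have hne : (⟨1, by omega⟩ : Fin n) ≠ ⟨n - 2, by omega⟩ := by
    simp only [ne_eq, Fin.ext_iff]
    omega
  have hc : (Function.update id ⟨n - 2, by omega⟩ ⟨1, by omega⟩) ∈
      words (M18 hn) := by
    convert mem_words_letter hn 2 using 1
    funext q
    simp [Function.update_apply, step18, Fin.ext_iff]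
  have hd : (Function.update id ⟨n - 2, by omega⟩ ⟨0, by omega⟩) ∈
      words (M18 hn) := by
    convert mem_words_letter hn 3 using 1
    funext q
    simp [Function.update_apply, step18, Fin.ext_iff]
  have hf : (Function.update id ⟨1, by omega⟩ ⟨n - 1, by omega⟩) ∈
      words (M18 hn) := by
    convert mem_words_letter hn 5 using 1
    funext q
    simp [Function.update_apply, step18, Fin.ext_iff]
  by_cases hy0 : y = ⟨0, by omega⟩
  · have := conj _ _ _ (mem_words_swap hn hlast hx) hd
    rwa [Equiv.swap_apply_left, Equiv.swap_apply_of_ne_of_ne hlast.1.symm hx.1.symm, ← hy0] at this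
  by_cases hy1 : y = ⟨n - 1, by omega⟩
  · have := conj _ _ _ (mem_words_swap hn hone hx) hf
    rwa [Equiv.swap_apply_left, Equiv.swap_apply_of_ne_of_ne hone.2.symm hx.2.symm, ← hy1] at this
  by_cases hxy : x = y
  · subst hxy
    have : Function.update (id : Fin n → Fin n) x x = id := Function.update_eq_self x id
    rw [this]
    exact id_mem_words
  -- The image `z` of `1` under `(n-2 x)` is again different from `x`, so `(z y)` fixes `x`.
  set z := Equiv.swap ⟨n - 2, by omega⟩ x ⟨1, by omega⟩ with hz
  have hzx : z ≠ x := by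
    intro h
    have : z = Equiv.swap ⟨n - 2, by omega⟩ x ⟨n - 2, by omega⟩ := by
      rw [h, Equiv.swap_apply_left]
    exact hne ((Equiv.swap _ _).injective this)
  have hzm : Mid hn z := by
    rw [hz, Equiv.swap_apply_def]
    split_ifs
    exacts [hx, hlast, hone]
  have := conj _ _ _ (mem_words_swap hn hzm ⟨hy0, hy1⟩)
    (conj _ _ _ (mem_words_swap hn hlast hx) hc)
  rwa [Equiv.swap_apply_left, ← hz, Equiv.swap_apply_left,
    Equiv.swap_apply_of_ne_of_ne hzx.symm hxy] at this

theorem mem_words_of_fix (t : Fin n → Fin n) (h0 : t ⟨0, by omega⟩ = ⟨0, by omega⟩)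
    (h1 : t ⟨n - 1, by omega⟩ = ⟨n - 1, by omega⟩) :
    (t) ∈ words (M18 hn) := by
  induction hm : n - (Finset.univ.image t).card using Nat.strong_induction_on generalizing t with
  | _ m ih =>
  by_cases hinj : Function.Injective t
  · exact mem_words_of_perm hn (Equiv.ofBijective t (Finite.injective_iff_bijective.1 hinj)) h0 h1
  obtain ⟨x, y, hxy, hne, hx⟩ : ∃ x y, t x = t y ∧ x ≠ y ∧ Mid hn x := by
    simp only [Function.Injective, not_forall] at hinj
    obtain ⟨x, y, hxy, hne⟩ := hinj
    by_cases hx : Mid hn x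
    · exact ⟨x, y, hxy, hne, hx⟩
    refine ⟨y, x, hxy.symm, Ne.symm hne, ?_⟩
    have h01 : (⟨0, by omega⟩ : Fin n) ≠ ⟨n - 1, by omega⟩ := by
      simp only [ne_eq, Fin.ext_iff]
      omega
    simp only [Mid, not_and_or, not_not] at hx
    constructor
    · rintro rfl
      rcases hx with rfl | rfl
      · exact hne rfl
      · rw [h0, h1] at hxy
        exact h01 hxy.symm
    · rintro rfl
      rcases hx with rfl | rfl
      · rw [h0, h1] at hxy
        exact h01 hxy
      · exact hne rfl
  obtain ⟨z, hz⟩ : ∃ z, ∀ q, t q ≠ z := by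
    by_contra! hcon
    exact hinj (Finite.injective_iff_surjective.2 hcon)
  have hmem : (Function.update t x z) ∈ words (M18 hn) := by
    refine ih _ ?_ _ ?_ ?_ rfl
    · have hsub : insert z (Finset.univ.image t) ⊆
          Finset.univ.image (Function.update t x z) := by
        intro r hr
        rw [Finset.mem_insert, Finset.mem_image] at hr
        rw [Finset.mem_image]
        rcases hr with rfl | ⟨q, -, rfl⟩
        · exact ⟨x, Finset.mem_univ _, Function.update_self ..⟩
        · by_cases hq : q = x
          · subst hq
            exact ⟨y, Finset.mem_univ _, by rw [Function.update_of_ne hne.symm, hxy]⟩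
          · exact ⟨q, Finset.mem_univ _, Function.update_of_ne hq ..⟩
      have hcard := Finset.card_le_card hsub
      rw [Finset.card_insert_of_notMem (by simpa using hz)] at hcard
      have hle := Finset.card_le_univ (Finset.univ.image (Function.update t x z))
      rw [Fintype.card_fin] at hle
      omega
    · rw [Function.update_of_ne hx.1.symm, h0]
    · rw [Function.update_of_ne hx.2.symm, h1]
  convert comp_mem_words hmem (mem_words_assign hn (y := y) hx) using 1
  funext q
  change t q = Function.update t x z (Function.update id x y q)
  by_cases hq : q = x
  · subst hq
    rw [Function.update_self, Function.update_of_ne hne.symm, hxy]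
  · rw [Function.update_of_ne hq, id, Function.update_of_ne hq]

theorem mem_words_of_good {t : Fin n → Fin n} (ht : Good hn t) :
    (t) ∈ words (M18 hn) := by
  obtain ⟨h1, h2⟩ := ht
  by_cases h0 : t ⟨0, by omega⟩ = ⟨0, by omega⟩
  · exact mem_words_of_fix hn t h0 h1
  replace h2 := h2.resolve_left h0
  have h01 : (⟨n - 1, by omega⟩ : Fin n) ≠ ⟨0, by omega⟩ := by
    simp only [ne_eq, Fin.ext_iff]
    omega
  -- `t` is `g`, followed by `e`, followed by `k`.
  let g : Fin n → Fin n := fun q =>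
    if q = ⟨n - 1, by omega⟩ then q
    else if t q = t ⟨0, by omega⟩ then ⟨0, by omega⟩ else ⟨n - 1, by omega⟩
  let k : Fin n → Fin n := Function.update id ⟨1, by omega⟩ (t ⟨0, by omega⟩)
  have hg : (g) ∈ words (M18 hn) :=
    mem_words_of_fix hn g (by simp [g, h01.symm]) (by simp [g])
  have hk : (k) ∈ words (M18 hn) :=
    mem_words_assign hn ((mid_iff hn).2 (by simp only; omega))
  convert comp_mem_words (comp_mem_words hk (mem_words_letter hn 4)) hg using 1
  funext q
  change t q = k (step18 n hn (g q) 4)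
  have e0 : step18 n hn ⟨0, by omega⟩ 4 = ⟨1, by omega⟩ := by
    simp [step18, show 0 ≠ n - 1 by omega]
  have e1 : step18 n hn ⟨n - 1, by omega⟩ 4 = ⟨n - 1, by omega⟩ := by
    simp [step18]
  have k0 : k ⟨1, by omega⟩ = t ⟨0, by omega⟩ := Function.update_self ..
  have k1 : k ⟨n - 1, by omega⟩ = ⟨n - 1, by omega⟩ :=
    Function.update_of_ne (by simp only [ne_eq, Fin.ext_iff]; omega) ..
  by_cases hq : q = ⟨n - 1, by omega⟩
  · have : g q = ⟨n - 1, by omega⟩ := by simp [g, hq]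
    rw [this, e1, k1, hq, h1]
  by_cases hq0 : t q = t ⟨0, by omega⟩
  · have : g q = ⟨0, by omega⟩ := by simp only [g, if_neg hq, if_pos hq0]
    rw [this, e0, k0, hq0]
  · have : g q = ⟨n - 1, by omega⟩ := by simp only [g, if_neg hq, if_neg hq0]
    rw [this, e1, k1]
    exact (h2 q).resolve_left hq0

theorem minimal18 : DFAMinimal (M18 hn) := by
  constructor
  · intro q
    have hG : Good hn (fun p => if p = ⟨n - 1, by omega⟩ then p else q) := by
      refine ⟨by simp, Or.inr fun p => ?_⟩
      have h01 : (⟨0, by omega⟩ : Fin n) ≠ ⟨n - 1, by omega⟩ := by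
        simp only [ne_eq, Fin.ext_iff]
        omega
      simp only [if_neg h01]
      split_ifs with hp
      exacts [Or.inr hp, Or.inl rfl]
    obtain ⟨w, hw⟩ := mem_words_of_good hn hG
    refine ⟨w, ?_⟩
    rw [hw]
    exact if_neg (by simp only [Fin.ext_iff]; omega)
  · -- Sending a middle state `p` to `n-1` and fixing all others separates `p` from `q ≠ n-1`.
    have key : ∀ p q : Fin n, Mid hn p → q ≠ ⟨n - 1, by omega⟩ →
        (∀ w, (M18 hn).evalFrom p w ∈ (M18 hn).accept ↔
          (M18 hn).evalFrom q w ∈ (M18 hn).accept) → p = q := by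
      intro p q hp hq h
      by_contra hne
      obtain ⟨w, hw⟩ := mem_words_assign hn (y := ⟨n - 1, by omega⟩) hp
      have := h w
      rw [hw, hw, Function.update_self, Function.update_of_ne (Ne.symm hne)] at this
      exact hq (this.1 rfl)
    intro p q h
    have hnil : p = ⟨n - 1, by omega⟩ ↔ q = ⟨n - 1, by omega⟩ := h []
    by_cases hp : p = ⟨n - 1, by omega⟩
    · rw [hp, hnil.1 hp]
    have hq : q ≠ ⟨n - 1, by omega⟩ := fun e => hp (hnil.2 e)
    by_cases hp0 : p = ⟨0, by omega⟩
    · by_cases hq0 : q = ⟨0, by omega⟩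
      · rw [hp0, hq0]
      · exact (key q p ⟨hq0, hq⟩ hp fun w => (h w).symm).symm
    · exact key p q ⟨hp0, hp⟩ hq h

theorem ideal18 : IsTwoSidedIdeal ((M18 hn).accepts : Set (List (Fin 6))) := by
  constructor
  · obtain ⟨w, hw⟩ := (minimal18 hn).1 ⟨n - 1, by omega⟩
    exact ⟨w, hw⟩
  · ext x
    constructor
    · intro hx
      exact ⟨[], x, hx, [], by simp⟩
    · rintro ⟨u, w, hw, v, rfl⟩
      replace hw : (M18 hn).evalFrom ⟨0, by omega⟩ w = ⟨n - 1, by omega⟩ := hw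
      change (M18 hn).evalFrom ⟨0, by omega⟩ (u ++ w ++ v) = ⟨n - 1, by omega⟩
      rw [DFA.evalFrom_of_append, DFA.evalFrom_of_append]
      obtain ⟨-, h | h⟩ := good_word hn w
      · simp only [hw, Fin.ext_iff] at h
        omega
      · simp only [hw, or_self] at h
        rw [h]
        exact (good_word hn v).1

/-! ### Counting -/

theorem synCompl18 :
    synCompl ((M18 hn).accepts : Set (List (Fin 6))) = Nat.card {t : Fin n → Fin n // Good hn t} := by
  let F : Quotient (synSetoid ((M18 hn).accepts : Set (List (Fin 6)))) →
      {t : Fin n → Fin n // Good hn t} :=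
    Quotient.lift (fun w => ⟨fun q => (M18 hn).evalFrom q w.1, good_word hn w.1⟩)
      (fun x y h => Subtype.ext (funext ((synRel_iff (minimal18 hn) x.1 y.1).1 h)))
  apply Nat.card_eq_of_bijective F
  constructor
  · intro x y
    induction x using Quotient.inductionOn
    induction y using Quotient.inductionOn
    intro h
    exact Quotient.sound ((synRel_iff (minimal18 hn) _ _).2
      fun q => congrFun (Subtype.ext_iff.1 h) q)
  · rintro ⟨t, ht⟩
    obtain ⟨w, hw⟩ := mem_words_of_good hn ht
    by_cases hw0 : w = []
    · -- The identity is also induced by the non-empty word `bb`.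
      subst hw0
      refine ⟨Quotient.mk _ ⟨[1, 1], by simp⟩, Subtype.ext (funext fun q => ?_)⟩
      have hq : q = t q := hw q
      change step18 n hn (step18 n hn q 1) 1 = t q
      rw [← hq]
      simp only [step18]
      apply Fin.ext
      by_cases h1 : q.val = 1
      · simp [h1]
      · by_cases h2 : q.val = 2 <;> simp [h1, h2]
    · exact ⟨Quotient.mk _ ⟨w, hw0⟩, Subtype.ext (funext hw)⟩

theorem card_mid : Fintype.card {q // Mid hn q} = n - 2 := by
  have h : (Finset.univ.filter (Mid hn)) =
      (Finset.univ.erase (⟨0, by omega⟩ : Fin n)).erase ⟨n - 1, by omega⟩ := by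
    ext q
    simp only [Mid, Finset.mem_filter, Finset.mem_univ, Finset.mem_erase, true_and, and_true]
    exact and_comm
  rw [Fintype.card_subtype, h, Finset.card_erase_of_mem, Finset.card_erase_of_mem
    (Finset.mem_univ _), Finset.card_univ, Fintype.card_fin]
  · omega
  · simp only [Finset.mem_erase, ne_eq, Fin.ext_iff, Finset.mem_univ, and_true]
    omega

/-- The parametrization of `Good` transformations: those fixing `0`, those sending `0` to a middle
state `i` (where the Boolean says whether a middle state goes to `i`), and the constant `n-1`. -/
def param : ({q // Mid hn q} → Fin n) ⊕ ({q // Mid hn q} × ({q // Mid hn q} → Bool)) ⊕ Unit →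
    Fin n → Fin n
  | .inl g, q => if h : Mid hn q then g ⟨q, h⟩ else q
  | .inr (.inl (i, g)), q =>
    if h : Mid hn q then (if g ⟨q, h⟩ then i.1 else ⟨n - 1, by omega⟩)
    else if q = ⟨0, by omega⟩ then i.1 else ⟨n - 1, by omega⟩
  | .inr (.inr _), _ => ⟨n - 1, by omega⟩

theorem card_good :
    Nat.card {t : Fin n → Fin n // Good hn t} = n ^ (n - 2) + (n - 2) * 2 ^ (n - 2) + 1 := by
  have m0 : ¬ Mid hn ⟨0, by omega⟩ := fun h => h.1 rfl
  have m1 : ¬ Mid hn ⟨n - 1, by omega⟩ := fun h => h.2 rfl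
  have h01 : (⟨n - 1, by omega⟩ : Fin n) ≠ ⟨0, by omega⟩ := by
    simp only [ne_eq, Fin.ext_iff]
    omega
  have hgood : ∀ s, Good hn (param hn s) := by
    rintro (g | ⟨i, g⟩ | _)
    · exact ⟨by simp [param, m1], Or.inl (by simp [param, m0])⟩
    · refine ⟨by simp only [param, m1, h01, if_false, dite_false], Or.inr fun q => ?_⟩
      simp only [param, m0, if_true, dite_false]
      split_ifs <;> simp
    · exact ⟨rfl, Or.inr fun q => Or.inl rfl⟩
  -- The image of `0` tells the three families, and the parameter `i`, apart.
  have z1 : ∀ g, param hn (.inl g) ⟨0, by omega⟩ = ⟨0, by omega⟩ := fun g => by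
    simp only [param, m0, dite_false]
  have z2 : ∀ i g, param hn (.inr (.inl (i, g))) ⟨0, by omega⟩ = i.1 := fun i g => by
    simp only [param, m0, dite_false, if_true]
  have z3 : ∀ u, param hn (.inr (.inr u)) ⟨0, by omega⟩ = ⟨n - 1, by omega⟩ := fun u => rfl
  have hinj : Function.Injective (param hn) := by
    intro s s' h
    have hz := congrFun h ⟨0, by omega⟩
    rcases s with g | ⟨i, g⟩ | _ <;> rcases s' with g' | ⟨i', g'⟩ | _ <;>
      simp only [z1, z2, z3] at hz
    · congr 1
      funext q
      have := congrFun h q.1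
      simpa only [param, q.2, dite_true] using this
    · exact absurd hz.symm i'.2.1
    · exact absurd hz.symm h01
    · exact absurd hz i.2.1
    · obtain rfl : i = i' := Subtype.ext hz
      congr 3
      funext q
      have := congrFun h q.1
      simp only [param, q.2, dite_true] at this
      have hi := i.2.2
      cases hg : g q <;> cases hg' : g' q <;> simp_all
    · exact absurd hz i.2.2
    · exact absurd hz h01
    · exact absurd hz.symm i'.2.2
    · rfl
  have hsurj : ∀ t, Good hn t → ∃ s, param hn s = t := by
    rintro t ⟨t1, t2⟩
    by_cases t0 : t ⟨0, by omega⟩ = ⟨0, by omega⟩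
    · refine ⟨.inl fun q => t q.1, funext fun q => ?_⟩
      by_cases hq : Mid hn q
      · simp only [param, hq, dite_true]
      · simp only [param, hq, dite_false]
        simp only [Mid, not_and_or, not_not] at hq
        rcases hq with rfl | rfl
        exacts [t0.symm, t1.symm]
    replace t2 := t2.resolve_left t0
    by_cases tl : t ⟨0, by omega⟩ = ⟨n - 1, by omega⟩
    · refine ⟨.inr (.inr ()), funext fun q => ?_⟩
      simp only [tl, or_self] at t2
      exact (t2 q).symm
    · refine ⟨.inr (.inl (⟨_, t0, tl⟩, fun q => decide (t q.1 = t ⟨0, by omega⟩))),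
        funext fun q => ?_⟩
      by_cases hq : Mid hn q
      · simp only [param, hq, dite_true, decide_eq_true_eq]
        split_ifs with h
        exacts [h.symm, ((t2 q).resolve_left h).symm]
      · simp only [param, hq, dite_false]
        simp only [Mid, not_and_or, not_not] at hq
        rcases hq with rfl | rfl
        · exact if_pos rfl
        · rw [if_neg h01, t1]
  have hbij : Function.Bijective
      (fun s => (⟨param hn s, hgood s⟩ : {t : Fin n → Fin n // Good hn t})) :=
    ⟨fun s s' h => hinj (Subtype.ext_iff.1 h), fun ⟨t, ht⟩ =>
      let ⟨s, hs⟩ := hsurj t ht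
      ⟨s, Subtype.ext hs⟩⟩
  rw [← Nat.card_eq_of_bijective _ hbij, Nat.card_eq_fintype_card]
  simp [card_mid hn, add_assoc]

end Words

/-- For `n ≥ 4`, the automaton `𝒜_n` with states `{0,…,n-1}`,
alphabet `{a,b,c,d,e,f}`, initial state `0` and final state `n-1` is minimal,
and its language is a two-sided ideal with quotient complexity `n` and
syntactic complexity `n^{n-2} + (n-2)·2^{n-2} + 1`. -/
theorem stmt_18 (n : ℕ) (hn : 4 ≤ n) :
    let M : DFA (Fin 6) (Fin n) :=
      { step := step18 n hn, start := ⟨0, by omega⟩, accept := {⟨n - 1, by omega⟩} }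
    DFAMinimal M ∧
    IsTwoSidedIdeal (M.accepts : Set (List (Fin 6))) ∧
    quotCompl (M.accepts : Set (List (Fin 6))) = n ∧
    synCompl (M.accepts : Set (List (Fin 6))) = n ^ (n - 2) + (n - 2) * 2 ^ (n - 2) + 1 := by
  intro M
  exact ⟨minimal18 hn, ideal18 hn, by rw [quotCompl_eq_card (minimal18 hn), Nat.card_fin],
    (synCompl18 hn).trans (card_good hn)⟩
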